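/- Work in ℝ³ with Γ = {(x,y,z) : x = 0} and Ω = {(x,y,z) : z = 0}, fix p = (p₁,p₂,p₃) with p₁ > 0 and p₃ > 0, let f be the central projection from Γ to Ω through p, and let v₀ = (0,p₂,p₃). Let F = (v₀,v₁,…,v_{n−1}) be a convex fan in general position contained in Γ whose kernel convex vertex is v₀ and all of whose other vertices have z-coordinate strictly less than p₃, and let T = (f(v₁),…,f(v_{n−1})) be the resulting terrain in Ω. Then for all i, j ∈ {1,…,n−1}, the vertices v_i and v_j see each other in F if and only if f(v_i) and f(v_j) see each other in T. -/

import Mathlib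

noncomputable section

/-- Points of `ℝ³`; coordinate `0` is `x`, coordinate `1` is `y`, coordinate `2` is `z`. -/
abbrev E3 : Type := Fin 3 → ℝ

/-- `f` is the central projection through `p` from the plane `Γ = {x = 0}` to the plane
`Ω = {z = 0}`: every point `a` of `Γ` whose `z`-coordinate differs from that of `p`
(i.e. every non-vanishing point of `Γ`) is sent to the (unique) intersection point of the
line through `p` and `a` with `Ω`. -/
def IsCentralProjC (p : E3) (f : E3 → E3) : Prop :=
  ∀ a : E3, a 0 = 0 → a 2 ≠ p 2 →
    (f a) 2 = 0 ∧ ∃ t : ℝ, f a = p + t • (a - p)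

/-- The boundary of the polygon with vertices `w 0, …, w (n-1)` (cyclically): the union
of its edges. -/
def polyBoundary (w : ℕ → E3) (n : ℕ) : Set E3 :=
  ⋃ i ∈ Finset.range n, segment ℝ (w i) (w ((i + 1) % n))

/-- The closure of the polygon with vertices `w 0, …, w (n-1)` drawn in the plane `P`:
its boundary together with all bounded connected components of the complement (in `P`)
of the boundary, i.e. the bounded region enclosed by the boundary plus the boundary. -/
def polyRegion (P : Set E3) (w : ℕ → E3) (n : ℕ) : Set E3 :=
  polyBoundary w n ∪
    {x ∈ P | x ∉ polyBoundary w n ∧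
      Bornology.IsBounded (connectedComponentIn (P \ polyBoundary w n) x)}

/-- `w 0, …, w (n-1)` are the vertices of a simple polygon: they are pairwise distinct
and two distinct (cyclically consecutive) edges intersect exactly at their shared
endpoints. -/
def IsSimplePolygon (w : ℕ → E3) (n : ℕ) : Prop :=
  3 ≤ n ∧ (∀ i < n, ∀ j < n, w i = w j → i = j) ∧
    ∀ i < n, ∀ j < n, i ≠ j →
      segment ℝ (w i) (w ((i + 1) % n)) ∩ segment ℝ (w j) (w ((j + 1) % n)) =
        ({w i, w ((i + 1) % n)} : Set E3) ∩ ({w j, w ((j + 1) % n)} : Set E3)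

/-- The polygon is in general position: no three of its vertices are collinear. -/
def GeneralPosition (w : ℕ → E3) (n : ℕ) : Prop :=
  ∀ i < n, ∀ j < n, ∀ k < n, i ≠ j → j ≠ k → i ≠ k →
    ¬ Collinear ℝ ({w i, w j, w k} : Set E3)

/-- Vertex `w i` is a convex vertex (interior angle less than `π`): the closure of the
polygon is locally convex at `w i`. -/
def ConvexVertexAt (P : Set E3) (w : ℕ → E3) (n : ℕ) (i : ℕ) : Prop :=
  ∃ U ∈ nhds (w i), Convex ℝ (polyRegion P w n ∩ U)

/-- Vertex `w i` is a kernel vertex: it sees every point of the closure of the polygon,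
i.e. for every point `x` of the closure, the segment from `w i` to `x` stays inside the
closure. -/
def IsKernelVertexAt (P : Set E3) (w : ℕ → E3) (n : ℕ) (i : ℕ) : Prop :=
  ∀ x ∈ polyRegion P w n, segment ℝ (w i) x ⊆ polyRegion P w n

/-- A convex fan with convex kernel vertex `w i`: a simple polygon in the plane `P` whose
vertex `w i` is convex and sees every point of the closure. -/
def IsConvexFanAt (P : Set E3) (w : ℕ → E3) (n : ℕ) (i : ℕ) : Prop :=
  IsSimplePolygon w n ∧ ConvexVertexAt P w n i ∧ IsKernelVertexAt P w n i

/-- `u 0, …, u (m-1)` are the vertices of a simple polygonal chain: they are pairwise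
distinct and two distinct (consecutive) edges intersect exactly at their shared
endpoints. -/
def IsSimpleChain (u : ℕ → E3) (m : ℕ) : Prop :=
  (∀ i < m, ∀ j < m, u i = u j → i = j) ∧
    ∀ i, i + 1 < m → ∀ j, j + 1 < m → i ≠ j →
      segment ℝ (u i) (u (i + 1)) ∩ segment ℝ (u j) (u (j + 1)) =
        ({u i, u (i + 1)} : Set E3) ∩ ({u j, u (j + 1)} : Set E3)

/-- `a` sees `b` in the polygon `(w 0, …, w (n-1))` drawn in the plane `P`: the segment
joining them does not meet the exterior of the polygon, i.e. it stays in the closure. -/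
def SeesInPoly (P : Set E3) (w : ℕ → E3) (n : ℕ) (a b : E3) : Prop :=
  segment ℝ a b ⊆ polyRegion P w n

/-- In the plane `Ω = {z = 0}`, with monotone axis `y` (coordinate `1`) and "above"
meaning the far side in the orthogonal in-plane direction `x` (here: smaller coordinate
`0`, the far side as seen from the projection point), the point `q` lies on or above the
segment from `a` to `b`: its `y`-coordinate is in the `y`-range of the segment and it is
on, or strictly on the far side of, the segment. -/
def OnOrAbove (a b q : E3) : Prop :=
  ∃ t ∈ Set.Icc (0 : ℝ) 1,
    q 1 = (1 - t) * a 1 + t * b 1 ∧ q 0 ≤ (1 - t) * a 0 + t * b 0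

/-- Vertices `u i` and `u j` of the terrain `(u 0, …, u (m-1))` in `Ω = {z = 0}` see each
other: no vertex of the terrain other than these two lies on or above the segment
joining them. -/
def SeesInTerrain (u : ℕ → E3) (m : ℕ) (i j : ℕ) : Prop :=
  ∀ k < m, k ≠ i → k ≠ j → ¬ OnOrAbove (u i) (u j) (u k)

/-!
Seen from `v₀`, record a point of `Γ` below the horizontal line through `v₀` by its slope and its
inverse depth. This chart is projective, so it preserves segments, and it sends `v₀` to vertical
infinity: since `v₀` is a kernel vertex, the polygon becomes the set of points lying on or above the
image of the chain `v₁, …, v_{n-1}`. In the same chart `f` is affine, with the `y`-coordinate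
increasing in the slope and the `x`-coordinate decreasing in the inverse depth, so lying on or above
a segment in `Ω` again means lying on or above its image in the chart. It remains to show that a
segment between two vertices stays on or above the chain exactly when no other vertex lies on or
above the segment.

Monotonicity of the chain comes from the topology of the polygon: a point above the chain and not on
it is an interior point of the polygon, unless it lies over `v₁` or `v_{n-1}`. Hence the lower
envelope of the chain is closed, and so it is the graph of a continuous function. It connects the
two ends of the chain, which is simple, so it passes through all the vertices, in order. General
position rules out vertices on the segment itself.
-/

open Set Topology

section UpwardHull

variable {X : Type*}

/-- The union of the closed vertical rays going up from the points of `S`: the points lying on or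
above `S`. -/
def upwardHull (S : Set (X × ℝ)) : Set (X × ℝ) :=
  {x | ∃ y ∈ S, y.1 = x.1 ∧ y.2 ≤ x.2}

/-- The points of `S` with no other point of `S` vertically below them. -/
def lowerEnvelope (S : Set (X × ℝ)) : Set (X × ℝ) :=
  {x ∈ S | ∀ y ∈ S, y.1 = x.1 → x.2 ≤ y.2}

theorem subset_upwardHull (S : Set (X × ℝ)) : S ⊆ upwardHull S :=
  fun x hx => ⟨x, hx, rfl, le_rfl⟩

theorem upwardHull_subset_upwardHull {S T : Set (X × ℝ)} (h : S ⊆ upwardHull T) :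
    upwardHull S ⊆ upwardHull T := by
  rintro x ⟨y, hy, hyx, hle⟩
  obtain ⟨z, hz, hzy, hzle⟩ := h hy
  exact ⟨z, hz, hzy.trans hyx, hzle.trans hle⟩

theorem upwardHull_singleton_subset {S : Set (X × ℝ)} {x : X × ℝ} (hx : x ∈ S) :
    upwardHull {x} ⊆ upwardHull S :=
  upwardHull_subset_upwardHull (singleton_subset_iff.2 (subset_upwardHull S hx))

theorem fst_image_upwardHull (S : Set (X × ℝ)) :
    Prod.fst '' upwardHull S = Prod.fst '' S := by
  refine (image_subset_iff.2 ?_).antisymm (image_mono (subset_upwardHull S))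
  rintro x ⟨y, hy, hyx, -⟩
  exact ⟨y, hy, hyx⟩

theorem injOn_fst_lowerEnvelope (S : Set (X × ℝ)) : InjOn Prod.fst (lowerEnvelope S) :=
  fun x hx y hy hxy =>
    Prod.ext hxy ((hx.2 y hy.1 hxy.symm).antisymm (hy.2 x hx.1 hxy))

theorem mem_upwardHull_segment_iff [AddCommGroup X] [Module ℝ X] {a b x : X × ℝ} :
    x ∈ upwardHull (segment ℝ a b) ↔
      ∃ t ∈ Icc (0 : ℝ) 1, x.1 = (1 - t) • a.1 + t • b.1 ∧ (1 - t) * a.2 + t * b.2 ≤ x.2 := by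
  simp only [upwardHull, segment_eq_image, exists_mem_image, mem_ofPred_eq, Prod.fst_add,
    Prod.snd_add, Prod.smul_fst, Prod.smul_snd, smul_eq_mul, eq_comm]

variable [TopologicalSpace X] {S : Set (X × ℝ)}

theorem fst_image_lowerEnvelope [T1Space X] (hS : IsCompact S) :
    Prod.fst '' lowerEnvelope S = Prod.fst '' S := by
  refine (image_mono fun x hx => hx.1).antisymm ?_
  rintro _ ⟨x, hx, rfl⟩
  have hfiber : IsCompact (S ∩ Prod.fst ⁻¹' {x.1}) :=
    hS.inter_right (isClosed_singleton.preimage continuous_fst)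
  obtain ⟨y, ⟨hyS, hyx⟩, hmin⟩ :=
    hfiber.exists_isMinOn ⟨x, hx, rfl⟩ continuous_snd.continuousOn
  exact ⟨y, ⟨hyS, fun z hz hzy => hmin ⟨hz, hzy.trans hyx⟩⟩, hyx⟩

/-- Over the base point `s`, every point above `S` that is not on `S` is an interior point of the
upward hull of `S`. This is how the openness of the interior of a polygon is expressed once its
kernel vertex has been sent to vertical infinity. -/
def HullOpenOver (S : Set (X × ℝ)) (s : X) : Prop :=
  ∀ g, (s, g) ∈ upwardHull S → (s, g) ∉ S → upwardHull S ∈ 𝓝 (s, g)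

theorem HullOpenOver.fst_image_mem_nhds {x : X × ℝ} (h : HullOpenOver S x.1)
    (hbdd : BddAbove (Prod.snd '' S)) (hx : x ∈ S) : Prod.fst '' S ∈ 𝓝 x.1 := by
  obtain ⟨B, hB⟩ := hbdd
  have hxB : x.2 < B + 1 := (hB ⟨x, hx, rfl⟩).trans_lt (lt_add_one B)
  have hnotMem : (x.1, B + 1) ∉ S := fun hmem => (lt_add_one B).not_ge (hB ⟨_, hmem, rfl⟩)
  rw [← fst_image_upwardHull]
  exact isOpenMap_fst.image_mem_nhds (x := (x.1, B + 1))
    (h (B + 1) ⟨x, hx, rfl, hxB.le⟩ hnotMem)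

theorem isClosed_lowerEnvelope (hS : IsClosed S) (hfin : ∀ s, {g | (s, g) ∈ S}.Finite)
    (hopen : ∀ s, HullOpenOver S s ∨ {g | (s, g) ∈ S}.Subsingleton) :
    IsClosed (lowerEnvelope S) := by
  rw [← isOpen_compl_iff, isOpen_iff_mem_nhds]
  intro x hx
  by_cases hxS : x ∈ S
  swap
  · exact Filter.mem_of_superset (hS.isOpen_compl.mem_nhds hxS) fun z hz hz' => hz hz'.1
  obtain ⟨y, hyS, hyx, hlt⟩ : ∃ y ∈ S, y.1 = x.1 ∧ y.2 < x.2 := by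
    by_contra! h
    exact hx ⟨hxS, h⟩
  have hyS' : (x.1, y.2) ∈ S := hyx ▸ hyS
  have hhull : HullOpenOver S x.1 := (hopen x.1).resolve_right fun h => hlt.ne (h hyS' hxS)
  obtain ⟨g, ⟨hyg, hgx⟩, hgS⟩ := (Ioo_infinite hlt).exists_notMem_finite (hfin x.1)
  have hnear : ∀ᶠ z in 𝓝 x, (z.1, g) ∈ upwardHull S :=
    (continuous_fst.prodMk continuous_const).continuousAt (hhull g ⟨y, hyS, hyx, hyg.le⟩ hgS)
  filter_upwards [hnear, continuous_snd.continuousAt (lt_mem_nhds hgx)]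
    with z ⟨v, hvS, hvz, hvg⟩ hgz hz
  exact (hvg.trans_lt hgz).not_ge (hz.2 v hvS hvz)

end UpwardHull

section Connected

theorem isPreconnected_inter_preimage {X Y : Type*} [TopologicalSpace X] [TopologicalSpace Y]
    [T2Space Y] {K : Set X} (hK : IsCompact K) {f : X → Y} (hf : ContinuousOn f K)
    (hinj : InjOn f K) {T : Set Y} (hT : IsPreconnected T) (hTK : T ⊆ f '' K) :
    IsPreconnected (K ∩ f ⁻¹' T) := by
  have : CompactSpace K := isCompact_iff_compactSpace.1 hK
  have hemb : IsClosedEmbedding (K.domRestrict f) :=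
    (continuousOn_iff_continuous_domRestrict.1 hf).isClosedEmbedding (injOn_iff_injective.1 hinj)
  have himage : K.domRestrict f '' (K.domRestrict f ⁻¹' T) = T :=
    image_preimage_eq_of_subset (by rwa [range_domRestrict])
  rw [← Subtype.image_preimage_coe, IsInducing.subtypeVal.isPreconnected_image,
    ← hemb.isInducing.isPreconnected_image]
  exact himage.symm ▸ hT

theorem notMem_nhds_of_isPreconnected_of_isCompact {K : Set ℝ} (hconn : IsPreconnected K)
    (hcomp : IsCompact K) {a b : ℝ} (hnhds : ∀ s ∈ K, s ≠ a → s ≠ b → K ∈ 𝓝 s) : K ∉ 𝓝 a := by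
  intro hKa
  have ha : a ∈ K := mem_of_mem_nhds hKa
  obtain ⟨c, d, rfl⟩ : ∃ c d, K = Icc c d :=
    ⟨_, _, eq_Icc_of_connected_compact ⟨⟨a, ha⟩, hconn⟩ hcomp⟩
  have hcd : c ≤ d := ha.1.trans ha.2
  simp only [Icc_mem_nhds_iff] at hnhds hKa
  have hcb : c = b := by
    by_contra h
    exact lt_irrefl c (hnhds c (left_mem_Icc.2 hcd) hKa.1.ne h).1
  have hdb : d = b := by
    by_contra h
    exact lt_irrefl d (hnhds d (right_mem_Icc.2 hcd) hKa.2.ne' h).2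
  exact (hKa.1.trans hKa.2).ne (hcb.trans hdb.symm)

end Connected

section PolygonalChain

variable {E : Type*} [AddCommGroup E] [Module ℝ E]

theorem injOn_segment_of_ne {F : Type*} [AddCommGroup F] [Module ℝ F] (f : E →ᵃ[ℝ] F) {a b : E}
    (hab : f a ≠ f b) : InjOn f (segment ℝ a b) := by
  rw [segment_eq_image_lineMap]
  rintro _ ⟨s, -, rfl⟩ _ ⟨t, -, rfl⟩ hst
  rw [AffineMap.apply_lineMap, AffineMap.apply_lineMap] at hst
  rw [AffineMap.lineMap_injective ℝ hab hst]

/-- The part of the polygonal path through `u 0, u 1, …` that runs from `u i` to `u j`: the union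
of its edges. It is empty, rather than `{u i}`, when `j = i`. -/
def polygonalChain (u : ℕ → E) (i j : ℕ) : Set E :=
  ⋃ k ∈ Ico i j, segment ℝ (u k) (u (k + 1))

variable {u : ℕ → E} {i j k : ℕ}

theorem mem_polygonalChain {x : E} :
    x ∈ polygonalChain u i j ↔ ∃ k ∈ Ico i j, x ∈ segment ℝ (u k) (u (k + 1)) := by
  simp only [polygonalChain, mem_iUnion, exists_prop]

theorem segment_subset_polygonalChain (hk : k ∈ Ico i j) :
    segment ℝ (u k) (u (k + 1)) ⊆ polygonalChain u i j :=
  fun _ hx => mem_polygonalChain.2 ⟨k, hk, hx⟩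

theorem vertex_mem_polygonalChain (hij : i < j) (hk : k ∈ Icc i j) :
    u k ∈ polygonalChain u i j := by
  rcases hk.2.lt_or_eq with hkj | rfl
  · exact segment_subset_polygonalChain ⟨hk.1, hkj⟩ (left_mem_segment ℝ _ _)
  · obtain ⟨k, rfl⟩ := Nat.exists_eq_add_one_of_ne_zero (Nat.ne_zero_of_lt hij)
    exact segment_subset_polygonalChain ⟨Nat.le_of_lt_succ hij, k.lt_succ_self⟩
      (right_mem_segment ℝ _ _)

theorem polygonalChain_mono {i' j' : ℕ} (hi : i' ≤ i) (hj : j ≤ j') :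
    polygonalChain u i j ⊆ polygonalChain u i' j' :=
  biUnion_subset_biUnion_left (Ico_subset_Ico hi hj)

theorem polygonalChain_union (hij : i ≤ j) (hjk : j ≤ k) :
    polygonalChain u i j ∪ polygonalChain u j k = polygonalChain u i k := by
  rw [polygonalChain, polygonalChain, polygonalChain, ← biUnion_union,
    Ico_union_Ico_eq_Ico hij hjk]

theorem polygonalChain_subset_of_convex {C : Set E} (hC : Convex ℝ C)
    (hu : ∀ k ∈ Icc i j, u k ∈ C) : polygonalChain u i j ⊆ C :=
  iUnion₂_subset fun k hk =>
    hC.segment_subset (hu k ⟨hk.1, hk.2.le⟩) (hu (k + 1) ⟨hk.1.trans k.le_succ, hk.2⟩)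

theorem image_polygonalChain {F : Type*} [AddCommGroup F] [Module ℝ F] {f : E → F}
    (hf : ∀ k ∈ Ico i j, f '' segment ℝ (u k) (u (k + 1)) =
      segment ℝ (f (u k)) (f (u (k + 1)))) :
    f '' polygonalChain u i j = polygonalChain (fun k => f (u k)) i j := by
  rw [polygonalChain, image_iUnion₂]
  exact iUnion₂_congr hf

variable [TopologicalSpace E] [IsTopologicalAddGroup E] [ContinuousSMul ℝ E]

theorem isCompact_segment (a b : E) : IsCompact (segment ℝ a b) := by
  rw [segment_eq_image_lineMap]
  exact isCompact_Icc.image AffineMap.lineMap_continuous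

theorem isCompact_polygonalChain (u : ℕ → E) (i j : ℕ) : IsCompact (polygonalChain u i j) :=
  (finite_Ico i j).isCompact_biUnion fun k _ => isCompact_segment (u k) (u (k + 1))

theorem isPreconnected_polygonalChain (u : ℕ → E) (i j : ℕ) :
    IsPreconnected (polygonalChain u i j) :=
  IsPreconnected.biUnion_of_chain ordConnected_Ico
    (fun _ _ => (convex_segment _ _).isPreconnected)
    fun k _ _ => ⟨u (k + 1), right_mem_segment ℝ _ _, left_mem_segment ℝ _ _⟩

end PolygonalChain

section FanProfile

/-- The image of a fan whose kernel vertex has been sent to vertical infinity: a simple chain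
`u 0, …, u m`, no two vertices of which are on a vertical line, such that the polygon it bounds
together with the two vertical rays above `u 0` and `u m` is all of the upward hull of the chain.
Of the last condition we only record that the points of the hull that are off the boundary of the
polygon are interior. -/
structure IsFanProfile (u : ℕ → ℝ × ℝ) (m : ℕ) : Prop where
  pos : 0 < m
  injOn_fst : InjOn (fun k => (u k).1) (Iic m)
  inter_subset : ∀ k, polygonalChain u 0 k ∩ polygonalChain u k m ⊆ {u k}
  hullOpenOver : ∀ s, s ≠ (u 0).1 → s ≠ (u m).1 → HullOpenOver (polygonalChain u 0 m) s

variable {u : ℕ → ℝ × ℝ} {m : ℕ}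

theorem injOn_fst_segment {a b : ℝ × ℝ} (hab : a.1 ≠ b.1) : InjOn Prod.fst (segment ℝ a b) :=
  injOn_segment_of_ne (LinearMap.fst ℝ ℝ ℝ).toAffineMap hab

theorem fst_image_mem_nhds_of_mem_openSegment {S : Set (ℝ × ℝ)} {a b x : ℝ × ℝ} (hab : a.1 ≠ b.1)
    (hS : segment ℝ a b ⊆ S) (hx : x ∈ openSegment ℝ a b) : Prod.fst '' S ∈ 𝓝 x.1 := by
  have himage : Prod.fst '' openSegment ℝ a b = openSegment ℝ a.1 b.1 :=
    image_openSegment ℝ (LinearMap.fst ℝ ℝ ℝ).toAffineMap a b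
  have hopen : IsOpen (Prod.fst '' openSegment ℝ a b) := by
    rw [himage, openSegment_eq_Ioo' hab]
    exact isOpen_Ioo
  exact Filter.mem_of_superset (hopen.mem_nhds ⟨x, hx, rfl⟩)
    (image_mono ((openSegment_subset_segment ℝ a b).trans hS))

theorem exists_affineMap_mem_segment_iff {a b : ℝ × ℝ} (hab : a.1 ≠ b.1) :
    ∃ ℓ : ℝ →ᵃ[ℝ] ℝ, ∀ x : ℝ × ℝ, x ∈ segment ℝ a b ↔ x.1 ∈ uIcc a.1 b.1 ∧ x.2 = ℓ x.1 := by
  obtain ⟨ℓ, ha, hb⟩ : ∃ ℓ : ℝ →ᵃ[ℝ] ℝ, ℓ a.1 = a.2 ∧ ℓ b.1 = b.2 := by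
    refine ⟨((b.2 - a.2) / (b.1 - a.1)) • (AffineMap.id ℝ ℝ - AffineMap.const ℝ ℝ a.1) +
      AffineMap.const ℝ ℝ a.2, by simp, ?_⟩
    simp [div_mul_cancel₀ _ (sub_ne_zero.2 hab.symm)]
  have hlineMap (t : ℝ) : AffineMap.lineMap a b t =
      (AffineMap.lineMap a.1 b.1 t, ℓ (AffineMap.lineMap a.1 b.1 t)) := by
    rw [AffineMap.apply_lineMap, ha, hb]
    exact Prod.ext (AffineMap.fst_lineMap a b t) (AffineMap.snd_lineMap a b t)
  refine ⟨ℓ, fun x => ?_⟩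
  rw [← segment_eq_uIcc, segment_eq_image_lineMap, segment_eq_image_lineMap]
  constructor
  · rintro ⟨t, ht, rfl⟩
    rw [hlineMap]
    exact ⟨⟨t, ht, rfl⟩, rfl⟩
  · rintro ⟨⟨t, ht, htx⟩, hx⟩
    exact ⟨t, ht, by rw [hlineMap, htx, ← hx]⟩

theorem convex_snd_le (ℓ : ℝ →ᵃ[ℝ] ℝ) : Convex ℝ {x : ℝ × ℝ | x.2 ≤ ℓ x.1} := by
  have h := (convex_Iic (0 : ℝ)).affine_preimage ((LinearMap.snd ℝ ℝ ℝ).toAffineMap -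
    ℓ.comp (LinearMap.fst ℝ ℝ ℝ).toAffineMap)
  simpa [preimage] using h

namespace IsFanProfile

variable (hu : IsFanProfile u m)
include hu

theorem fst_ne_fst_succ {k : ℕ} (hk : k < m) : (u k).1 ≠ (u (k + 1)).1 :=
  hu.injOn_fst.ne (mem_Iic.2 hk.le) (mem_Iic.2 hk) k.lt_succ_self.ne

theorem finite_fiber (s : ℝ) : {g | (s, g) ∈ polygonalChain u 0 m}.Finite := by
  have hfiber : {g | (s, g) ∈ polygonalChain u 0 m} =
      ⋃ k ∈ Ico 0 m, {g | (s, g) ∈ segment ℝ (u k) (u (k + 1))} := by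
    ext g
    simp only [mem_ofPred_eq, mem_polygonalChain, mem_iUnion, exists_prop]
  rw [hfiber]
  refine (finite_Ico 0 m).biUnion fun k hk => Set.Subsingleton.finite fun g hg g' hg' => ?_
  exact congrArg Prod.snd (injOn_fst_segment (hu.fst_ne_fst_succ hk.2) hg hg' rfl)

theorem exists_eq_vertex_of_fst_image_notMem_nhds {x : ℝ × ℝ} (hx : x ∈ polygonalChain u 0 m)
    (hnhds : Prod.fst '' polygonalChain u 0 m ∉ 𝓝 x.1) : ∃ k ≤ m, x = u k := by
  obtain ⟨k, hk, hxk⟩ := mem_polygonalChain.1 hx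
  rw [← insert_endpoints_openSegment] at hxk
  rcases hxk with rfl | rfl | hopen
  · exact ⟨k, hk.2.le, rfl⟩
  · exact ⟨k + 1, hk.2, rfl⟩
  · exact absurd (fst_image_mem_nhds_of_mem_openSegment (hu.fst_ne_fst_succ hk.2)
      (segment_subset_polygonalChain hk) hopen) hnhds

theorem fst_image_mem_nhds {s : ℝ} (hs : s ∈ Prod.fst '' polygonalChain u 0 m)
    (h0 : s ≠ (u 0).1) (hm : s ≠ (u m).1) : Prod.fst '' polygonalChain u 0 m ∈ 𝓝 s := by
  obtain ⟨x, hx, rfl⟩ := hs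
  exact (hu.hullOpenOver x.1 h0 hm).fst_image_mem_nhds
    ((isCompact_polygonalChain u 0 m).image continuous_snd).bddAbove hx

theorem fst_image_notMem_nhds_of_end {k : ℕ} (hk : k = 0 ∨ k = m) :
    Prod.fst '' polygonalChain u 0 m ∉ 𝓝 (u k).1 := by
  have hconn : IsPreconnected (Prod.fst '' polygonalChain u 0 m) :=
    (isPreconnected_polygonalChain u 0 m).image _ continuous_fst.continuousOn
  have hcomp : IsCompact (Prod.fst '' polygonalChain u 0 m) :=
    (isCompact_polygonalChain u 0 m).image continuous_fst
  rcases hk with rfl | rfl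
  · exact notMem_nhds_of_isPreconnected_of_isCompact hconn hcomp
      fun s hs h0 hm => hu.fst_image_mem_nhds hs h0 hm
  · exact notMem_nhds_of_isPreconnected_of_isCompact hconn hcomp
      fun s hs hm h0 => hu.fst_image_mem_nhds hs h0 hm

theorem eq_end_of_fst_eq {k : ℕ} (hk : k = 0 ∨ k = m) {x : ℝ × ℝ}
    (hx : x ∈ polygonalChain u 0 m) (hxk : x.1 = (u k).1) : x = u k := by
  obtain ⟨l, hl, rfl⟩ :=
    hu.exists_eq_vertex_of_fst_image_notMem_nhds hx (hxk ▸ hu.fst_image_notMem_nhds_of_end hk)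
  rw [hu.injOn_fst (mem_Iic.2 hl) (mem_Iic.2 (by omega)) hxk]

theorem end_mem_lowerEnvelope {k : ℕ} (hk : k = 0 ∨ k = m) :
    u k ∈ lowerEnvelope (polygonalChain u 0 m) :=
  ⟨vertex_mem_polygonalChain hu.pos ⟨k.zero_le, by omega⟩,
    fun y hy hyk => (congrArg Prod.snd (hu.eq_end_of_fst_eq hk hy hyk)).ge⟩

theorem hullOpenOver_or_subsingleton (s : ℝ) : HullOpenOver (polygonalChain u 0 m) s ∨
    {g | (s, g) ∈ polygonalChain u 0 m}.Subsingleton := by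
  have hend : ∀ k, k = 0 ∨ k = m → {g | ((u k).1, g) ∈ polygonalChain u 0 m}.Subsingleton :=
    fun k hk g hg g' hg' => congrArg Prod.snd
      ((hu.eq_end_of_fst_eq hk hg rfl).trans (hu.eq_end_of_fst_eq hk hg' rfl).symm)
  by_cases h0 : s = (u 0).1
  · exact Or.inr (h0 ▸ hend 0 (Or.inl rfl))
  by_cases hm : s = (u m).1
  · exact Or.inr (hm ▸ hend m (Or.inr rfl))
  exact Or.inl (hu.hullOpenOver s h0 hm)

theorem isCompact_lowerEnvelope : IsCompact (lowerEnvelope (polygonalChain u 0 m)) :=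
  have hcompact := isCompact_polygonalChain u 0 m
  hcompact.of_isClosed_subset
    (isClosed_lowerEnvelope hcompact.isClosed hu.finite_fiber hu.hullOpenOver_or_subsingleton)
    fun _ hx => hx.1

/-- The lower envelope over the interval between `u i` and `u j` is connected, and the subchains
ending and starting at `u k` are closed sets covering it that meet in `u k` only. -/
theorem mem_lowerEnvelope_and_fst_mem_uIcc {i j k : ℕ} (hik : i ≤ k) (hkj : k ≤ j) (hjm : j ≤ m)
    (hi : u i ∈ lowerEnvelope (polygonalChain u 0 m))
    (hj : u j ∈ lowerEnvelope (polygonalChain u 0 m)) :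
    u k ∈ lowerEnvelope (polygonalChain u 0 m) ∧ (u k).1 ∈ uIcc (u i).1 (u j).1 := by
  rcases hik.eq_or_lt with rfl | hik
  · exact ⟨hi, left_mem_uIcc⟩
  rcases hkj.eq_or_lt with rfl | hkj
  · exact ⟨hj, right_mem_uIcc⟩
  set G := lowerEnvelope (polygonalChain u 0 m)
  set T := uIcc (u i).1 (u j).1
  have himage : Prod.fst '' G = Prod.fst '' polygonalChain u 0 m :=
    fst_image_lowerEnvelope (isCompact_polygonalChain u 0 m)
  have hTG : T ⊆ Prod.fst '' G := by
    rw [himage]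
    exact ((isPreconnected_polygonalChain u 0 m).image _
      continuous_fst.continuousOn).ordConnected.uIcc_subset ⟨_, hi.1, rfl⟩ ⟨_, hj.1, rfl⟩
  have hconn : IsPreconnected (G ∩ Prod.fst ⁻¹' T) :=
    isPreconnected_inter_preimage hu.isCompact_lowerEnvelope continuous_fst.continuousOn
      (injOn_fst_lowerEnvelope _) isPreconnected_uIcc hTG
  have hcover : G ∩ Prod.fst ⁻¹' T ⊆ polygonalChain u 0 k ∪ polygonalChain u k m := by
    rw [polygonalChain_union k.zero_le (hkj.le.trans hjm)]
    exact fun x hx => hx.1.1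
  obtain ⟨x, ⟨hxG, hxT⟩, hx⟩ := isPreconnected_closed_iff.1 hconn _ _
    (isCompact_polygonalChain u 0 k).isClosed (isCompact_polygonalChain u k m).isClosed hcover
    ⟨u i, ⟨hi, left_mem_uIcc⟩, vertex_mem_polygonalChain (by omega) ⟨i.zero_le, hik.le⟩⟩
    ⟨u j, ⟨hj, right_mem_uIcc⟩, vertex_mem_polygonalChain (by omega) ⟨hkj.le, hjm⟩⟩
  obtain rfl : x = u k := hu.inter_subset k hx
  exact ⟨hxG, hxT⟩

theorem vertex_mem_lowerEnvelope {k : ℕ} (hk : k ≤ m) :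
    u k ∈ lowerEnvelope (polygonalChain u 0 m) :=
  (hu.mem_lowerEnvelope_and_fst_mem_uIcc k.zero_le hk le_rfl
    (hu.end_mem_lowerEnvelope (Or.inl rfl)) (hu.end_mem_lowerEnvelope (Or.inr rfl))).1

theorem fst_mem_uIcc {i j k : ℕ} (hik : i ≤ k) (hkj : k ≤ j) (hjm : j ≤ m) :
    (u k).1 ∈ uIcc (u i).1 (u j).1 :=
  (hu.mem_lowerEnvelope_and_fst_mem_uIcc hik hkj hjm
    (hu.vertex_mem_lowerEnvelope ((hik.trans hkj).trans hjm)) (hu.vertex_mem_lowerEnvelope hjm)).2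

theorem notMem_upwardHull_segment {i j k : ℕ} (hk : k ≤ m)
    (hnotMem : u k ∉ segment ℝ (u i) (u j))
    (hsub : segment ℝ (u i) (u j) ⊆ upwardHull (polygonalChain u 0 m)) :
    u k ∉ upwardHull (segment ℝ (u i) (u j)) := by
  rintro ⟨x, hx, hxk, hle⟩
  obtain ⟨y, hy, hyx, hyle⟩ := hsub hx
  have hky : (u k).2 ≤ y.2 := (hu.vertex_mem_lowerEnvelope hk).2 y hy (hyx.trans hxk)
  have hxu : x = u k := Prod.ext hxk (hle.antisymm (hky.trans hyle))
  exact hnotMem (hxu ▸ hx)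

theorem segment_subset_upwardHull {i j : ℕ} (hij : i < j) (hj : j ≤ m)
    (hnot : ∀ k ≤ m, k ≠ i → k ≠ j → u k ∉ upwardHull (segment ℝ (u i) (u j))) :
    segment ℝ (u i) (u j) ⊆ upwardHull (polygonalChain u 0 m) := by
  have hne : (u i).1 ≠ (u j).1 :=
    hu.injOn_fst.ne (mem_Iic.2 (hij.le.trans hj)) (mem_Iic.2 hj) hij.ne
  obtain ⟨ℓ, hℓ⟩ := exists_affineMap_mem_segment_iff hne
  have hbelow : polygonalChain u i j ⊆ {x | x.2 ≤ ℓ x.1} := by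
    refine polygonalChain_subset_of_convex (convex_snd_le ℓ) fun k hk => ?_
    rcases eq_or_ne k i with rfl | hki
    · exact ((hℓ _).1 (left_mem_segment ℝ _ _)).2.le
    rcases eq_or_ne k j with rfl | hkj
    · exact ((hℓ _).1 (right_mem_segment ℝ _ _)).2.le
    by_contra hlt
    exact hnot k (hk.2.trans hj) hki hkj ⟨((u k).1, ℓ (u k).1),
      (hℓ _).2 ⟨hu.fst_mem_uIcc hk.1 hk.2 hj, rfl⟩, rfl, (not_le.1 hlt).le⟩
  have hfst : uIcc (u i).1 (u j).1 ⊆ Prod.fst '' polygonalChain u i j :=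
    ((isPreconnected_polygonalChain u i j).image _
      continuous_fst.continuousOn).ordConnected.uIcc_subset
      ⟨u i, vertex_mem_polygonalChain hij ⟨le_rfl, hij.le⟩, rfl⟩
      ⟨u j, vertex_mem_polygonalChain hij ⟨hij.le, le_rfl⟩, rfl⟩
  intro x hx
  obtain ⟨hx1, hx2⟩ := (hℓ x).1 hx
  obtain ⟨y, hy, hyx⟩ := hfst hx1
  exact ⟨y, polygonalChain_mono i.zero_le hj hy, hyx, hx2 ▸ hyx ▸ hbelow hy⟩

theorem segment_subset_upwardHull_iff {i j : ℕ} (hi : i ≤ m) (hj : j ≤ m) (hij : i ≠ j)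
    (hnotMem : ∀ k ≤ m, k ≠ i → k ≠ j → u k ∉ segment ℝ (u i) (u j)) :
    segment ℝ (u i) (u j) ⊆ upwardHull (polygonalChain u 0 m) ↔
      ∀ k ≤ m, k ≠ i → k ≠ j → u k ∉ upwardHull (segment ℝ (u i) (u j)) := by
  refine ⟨fun hsub k hk hki hkj => hu.notMem_upwardHull_segment hk (hnotMem k hk hki hkj) hsub,
    fun hnot => ?_⟩
  rcases hij.lt_or_gt with hlt | hgt
  · exact hu.segment_subset_upwardHull hlt hj hnot
  · rw [segment_symm] at hnot ⊢
    exact hu.segment_subset_upwardHull hgt hi fun k hk hkj hki => hnot k hk hki hkj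

end IsFanProfile

end FanProfile

section SlopeChart

theorem mapsTo_segment_of_perspective {E F : Type*} [AddCommGroup E] [Module ℝ E]
    [AddCommGroup F] [Module ℝ F] {g : E → F} (A : E →ᵃ[ℝ] F) (δ : E →ᵃ[ℝ] ℝ)
    (hg : ∀ x, δ x ≠ 0 → g x = (δ x)⁻¹ • A x) {a b : E} (ha : 0 < δ a) (hb : 0 < δ b) :
    MapsTo g (segment ℝ a b) (segment ℝ (g a) (g b)) := by
  rintro x hx
  have hδx : 0 < δ x := ((convex_Ioi (0 : ℝ)).affine_preimage δ).segment_subset ha hb hx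
  obtain ⟨s, t, hs, ht, hst, rfl⟩ := hx
  have hδ : δ (s • a + t • b) = s * δ a + t * δ b := Convex.combo_affine_apply hst
  refine ⟨s * δ a / δ (s • a + t • b), t * δ b / δ (s • a + t • b), by positivity,
    by positivity, ?_, ?_⟩
  · rw [← add_div, ← hδ, div_self hδx.ne']
  · rw [hg a ha.ne', hg b hb.ne', hg _ hδx.ne']
    simp only [smul_smul, Convex.combo_affine_apply hst (f := A), smul_add]
    congr 2 <;> field_simp

/-- The projective chart of the plane `x = 0` that sends the vanishing point `(0, p 1, p 2)` to
vertical infinity: a point below the horizontal line through the vanishing point is recorded as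
its slope seen from that point together with its inverse depth below that line. -/
def slopeChart (p : E3) : PartialEquiv E3 (ℝ × ℝ) where
  toFun a := ((a 1 - p 1) / (p 2 - a 2), (p 2 - a 2)⁻¹)
  invFun d := ![0, p 1 + d.1 / d.2, p 2 - d.2⁻¹]
  source := {a | a 0 = 0 ∧ a 2 < p 2}
  target := {d | 0 < d.2}
  map_source' _ ha := inv_pos.2 (sub_pos.2 ha.2)
  map_target' d hd := ⟨rfl, sub_lt_self _ (inv_pos.2 hd)⟩
  left_inv' a ha := by
    have hdepth : p 2 - a 2 ≠ 0 := (sub_pos.2 ha.2).ne'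
    ext c
    fin_cases c
    · exact ha.1.symm
    · simp [hdepth]
    · simp
  right_inv' d hd := by
    have hdepth : d.2 ≠ 0 := ne_of_gt hd
    ext <;> simp [hdepth]

variable {p a b x y : E3}

theorem convex_setOf_apply_zero_eq_zero : Convex ℝ {v : E3 | v 0 = 0} :=
  convex_hyperplane (LinearMap.proj (R := ℝ) (φ := fun _ : Fin 3 => ℝ) 0).isLinear 0

theorem convex_slopeChart_source : Convex ℝ (slopeChart p).source :=
  convex_setOf_apply_zero_eq_zero.inter
    (convex_halfSpace_lt (LinearMap.proj (R := ℝ) (φ := fun _ : Fin 3 => ℝ) 2).isLinear (p 2))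

theorem convex_slopeChart_target : Convex ℝ (slopeChart p).target :=
  convex_halfSpace_gt (LinearMap.snd ℝ ℝ ℝ).isLinear 0

theorem isOpen_slopeChart_target : IsOpen (slopeChart p).target :=
  isOpen_lt continuous_const continuous_snd

theorem continuousOn_slopeChart_symm : ContinuousOn (slopeChart p).symm (slopeChart p).target := by
  have hne : ∀ d ∈ (slopeChart p).target, d.2 ≠ 0 := fun _ hd => ne_of_gt hd
  refine continuousOn_pi.2 fun c => ?_
  fin_cases c
  · exact continuousOn_const
  · exact continuousOn_const.add (continuousOn_fst.div continuousOn_snd hne)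
  · exact continuousOn_const.sub (continuousOn_snd.inv₀ hne)

theorem mapsTo_slopeChart_segment (ha : a ∈ (slopeChart p).source)
    (hb : b ∈ (slopeChart p).source) :
    MapsTo (slopeChart p) (segment ℝ a b) (segment ℝ (slopeChart p a) (slopeChart p b)) := by
  let coord (c : Fin 3) : E3 →ᵃ[ℝ] ℝ := (LinearMap.proj c).toAffineMap
  refine mapsTo_segment_of_perspective
    ((coord 1 - AffineMap.const ℝ E3 (p 1)).prod (AffineMap.const ℝ E3 1))
    (AffineMap.const ℝ E3 (p 2) - coord 2) (fun z _ => ?_) (sub_pos.2 ha.2) (sub_pos.2 hb.2)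
  ext <;> simp [slopeChart, coord, div_eq_inv_mul]

theorem mapsTo_slopeChart_symm_segment {d e : ℝ × ℝ} (hd : d ∈ (slopeChart p).target)
    (he : e ∈ (slopeChart p).target) :
    MapsTo (slopeChart p).symm (segment ℝ d e)
      (segment ℝ ((slopeChart p).symm d) ((slopeChart p).symm e)) := by
  let fst := (LinearMap.fst ℝ ℝ ℝ).toAffineMap
  let snd := (LinearMap.snd ℝ ℝ ℝ).toAffineMap
  refine mapsTo_segment_of_perspective
    (AffineMap.pi ![0, p 1 • snd + fst, p 2 • snd - AffineMap.const ℝ (ℝ × ℝ) 1]) snd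
    (fun z hz => ?_) hd he
  have hz2 : z.2 ≠ 0 := hz
  ext c
  fin_cases c
  · simp [slopeChart]
  · change p 1 + z.1 / z.2 = z.2⁻¹ * (p 1 * z.2 + z.1)
    field_simp
  · change p 2 - z.2⁻¹ = z.2⁻¹ * (p 2 * z.2 - 1)
    field_simp

theorem image_slopeChart_segment (ha : a ∈ (slopeChart p).source)
    (hb : b ∈ (slopeChart p).source) :
    slopeChart p '' segment ℝ a b = segment ℝ (slopeChart p a) (slopeChart p b) := by
  refine (mapsTo_slopeChart_segment ha hb).image_subset.antisymm fun d hd => ?_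
  have ha' := (slopeChart p).map_source ha
  have hb' := (slopeChart p).map_source hb
  have hsymm := mapsTo_slopeChart_symm_segment ha' hb' hd
  rw [(slopeChart p).left_inv ha, (slopeChart p).left_inv hb] at hsymm
  exact ⟨_, hsymm, (slopeChart p).right_inv (convex_slopeChart_target.segment_subset ha' hb' hd)⟩

theorem slopeChart_mem_segment_iff (ha : a ∈ (slopeChart p).source)
    (hb : b ∈ (slopeChart p).source) (hx : x ∈ (slopeChart p).source) :
    slopeChart p x ∈ segment ℝ (slopeChart p a) (slopeChart p b) ↔ x ∈ segment ℝ a b := by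
  rw [← image_slopeChart_segment ha hb]
  exact (slopeChart p).injOn.mem_image_iff (convex_slopeChart_source.segment_subset ha hb) hx

theorem mem_segment_vanishingPoint_iff (hx : x 0 = 0) (hy : y 0 = 0) :
    x ∈ segment ℝ ![0, p 1, p 2] y ↔
      ∃ t ∈ Icc (0 : ℝ) 1, t * (y 1 - p 1) = x 1 - p 1 ∧ t * (p 2 - y 2) = p 2 - x 2 := by
  rw [segment_eq_image_lineMap]
  refine exists_congr fun t => and_congr_right fun _ => ?_
  have hlineMap : AffineMap.lineMap ![0, p 1, p 2] y t =
      ![t * y 0, t * (y 1 - p 1) + p 1, t * (y 2 - p 2) + p 2] := by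
    ext c
    fin_cases c <;> simp [AffineMap.pi_lineMap_apply, AffineMap.lineMap_apply]
  rw [hlineMap]
  constructor
  · rintro rfl
    refine ⟨(add_sub_cancel_right _ _).symm, ?_⟩
    change t * (p 2 - y 2) = p 2 - (t * (y 2 - p 2) + p 2)
    ring
  · rintro ⟨hslope, hdepth⟩
    ext c
    fin_cases c
    · exact (mul_eq_zero_of_right t hy).trans hx.symm
    · exact eq_sub_iff_add_eq.1 hslope
    · change t * (y 2 - p 2) + p 2 = x 2
      linear_combination -hdepth

theorem slopeChart_mem_upwardHull_singleton_iff (hx : x ∈ (slopeChart p).source)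
    (hy : y ∈ (slopeChart p).source) :
    slopeChart p x ∈ upwardHull {slopeChart p y} ↔ x ∈ segment ℝ ![0, p 1, p 2] y := by
  have hx0 : 0 < p 2 - x 2 := sub_pos.2 hx.2
  have hy0 : 0 < p 2 - y 2 := sub_pos.2 hy.2
  have hhull : slopeChart p x ∈ upwardHull {slopeChart p y} ↔
      (y 1 - p 1) * (p 2 - x 2) = (x 1 - p 1) * (p 2 - y 2) ∧ p 2 - x 2 ≤ p 2 - y 2 := by
    simp only [upwardHull, mem_singleton_iff, exists_eq_left, mem_ofPred_eq, slopeChart,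
      div_eq_div_iff hy0.ne' hx0.ne', inv_le_inv₀ hy0 hx0]
  rw [hhull, mem_segment_vanishingPoint_iff hx.1 hy.1]
  constructor
  · rintro ⟨hslope, hdepth⟩
    refine ⟨(p 2 - x 2) / (p 2 - y 2), ⟨by positivity, (div_le_one hy0).2 hdepth⟩, ?_,
      div_mul_cancel₀ _ hy0.ne'⟩
    rw [div_mul_eq_mul_div, div_eq_iff hy0.ne', mul_comm, hslope]
  · rintro ⟨t, ht, hslope, hdepth⟩
    refine ⟨?_, hdepth ▸ mul_le_of_le_one_left hy0.le ht.2⟩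
    rw [← hslope, ← hdepth]
    ring

theorem lineMap_vanishingPoint_mem_slopeChart_source (hx : x ∈ (slopeChart p).source) {t : ℝ}
    (ht : 0 < t) : AffineMap.lineMap ![0, p 1, p 2] x t ∈ (slopeChart p).source := by
  obtain ⟨hx0, hx2⟩ := hx
  refine ⟨?_, ?_⟩
  · simp [AffineMap.pi_lineMap_apply, hx0]
  · simpa [AffineMap.pi_lineMap_apply, AffineMap.lineMap_apply] using
      mul_neg_of_pos_of_neg ht (sub_neg.2 hx2)

end SlopeChart

section Polygon

theorem isClosed_polyBoundary (w : ℕ → E3) (n : ℕ) : IsClosed (polyBoundary w n) :=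
  (Finset.range n).finite_toSet.isClosed_biUnion fun _ _ => (isCompact_segment _ _).isClosed

theorem polyRegion_mem_nhdsWithin {P : Set E3} (hP : Convex ℝ P) {w : ℕ → E3} {n : ℕ} {x : E3}
    (hx : x ∈ polyRegion P w n) (hxB : x ∉ polyBoundary w n) : polyRegion P w n ∈ 𝓝[P] x := by
  obtain ⟨hxP, -, hbdd⟩ := hx.resolve_left hxB
  obtain ⟨ε, hε, hball⟩ := Metric.isOpen_iff.1 (isClosed_polyBoundary w n).isOpen_compl x hxB
  have hcomponent : P ∩ Metric.ball x ε ⊆ connectedComponentIn (P \ polyBoundary w n) x :=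
    (hP.inter (convex_ball x ε)).isPreconnected.subset_connectedComponentIn
      ⟨hxP, Metric.mem_ball_self hε⟩ fun z hz => ⟨hz.1, hball hz.2⟩
  filter_upwards [self_mem_nhdsWithin, mem_nhdsWithin_of_mem_nhds (Metric.ball_mem_nhds x hε)]
    with y hyP hy
  refine Or.inr ⟨hyP, hball hy, ?_⟩
  rwa [← connectedComponentIn_eq (hcomponent ⟨hyP, hy⟩)]

theorem inter_polyBoundary_nonempty {P : Set E3} {w : ℕ → E3} {n : ℕ} {T : Set E3} {x : E3}
    (hx : x ∈ polyRegion P w n) (hxT : x ∈ T) (hTP : T ⊆ P) (hT : IsPreconnected T)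
    (hunbounded : ¬ Bornology.IsBounded T) : (T ∩ polyBoundary w n).Nonempty := by
  by_contra hdisjoint
  have hTB : T ⊆ P \ polyBoundary w n := fun y hy => ⟨hTP hy, fun hyB => hdisjoint ⟨y, hy, hyB⟩⟩
  obtain ⟨-, -, hbdd⟩ := hx.resolve_left (hTB hxT).2
  exact hunbounded (hbdd.subset (hT.subset_connectedComponentIn hxT hTB))

theorem not_isBounded_lineMap_image_Ici {E : Type*} [NormedAddCommGroup E] [NormedSpace ℝ E]
    {a b : E} (hab : a ≠ b) (r : ℝ) :
    ¬ Bornology.IsBounded (AffineMap.lineMap a b '' Ici r) := fun hbdd =>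
  not_bddAbove_Ici r <| (((antilipschitzWith_lineMap (𝕜 := ℝ) hab).isBounded_preimage hbdd).subset
    (subset_preimage_image _ _)).bddAbove

theorem exists_lineMap_mem_polyBoundary {P : Set E3} {w : ℕ → E3} {n : ℕ} {v x : E3} (hvx : v ≠ x)
    (hP : ∀ t : ℝ, AffineMap.lineMap v x t ∈ P) (hx : x ∈ polyRegion P w n) :
    ∃ t : ℝ, 1 ≤ t ∧ AffineMap.lineMap v x t ∈ polyBoundary w n := by
  obtain ⟨_, ⟨t, ht, rfl⟩, hy⟩ := inter_polyBoundary_nonempty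
    (T := AffineMap.lineMap v x '' Ici (1 : ℝ)) hx
    ⟨1, self_mem_Ici, AffineMap.lineMap_apply_one v x⟩ (image_subset_iff.2 fun t _ => hP t)
    (isPreconnected_Ici.image _ AffineMap.lineMap_continuous.continuousOn)
    (not_isBounded_lineMap_image_Ici hvx 1)
  exact ⟨t, ht, hy⟩

theorem polyBoundary_add_two (w : ℕ → E3) (m : ℕ) : polyBoundary w (m + 2) =
    segment ℝ (w 0) (w 1) ∪ polygonalChain (fun k => w (k + 1)) 0 m ∪
      segment ℝ (w 0) (w (m + 1)) := by
  have hmod : ∀ k < m + 1, (k + 1) % (m + 2) = k + 1 := fun k hk => Nat.mod_eq_of_lt (by omega)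
  ext x
  simp only [polyBoundary, mem_iUnion, Finset.mem_range, exists_prop, mem_union, mem_polygonalChain,
    mem_Ico]
  constructor
  · rintro ⟨k, hk, hx⟩
    rcases (Nat.le_of_lt_succ hk).eq_or_lt with rfl | hk
    · rw [Nat.mod_self, segment_symm] at hx
      exact Or.inr hx
    rw [hmod k hk] at hx
    rcases k with - | k
    · exact Or.inl (Or.inl hx)
    · exact Or.inl (Or.inr ⟨k, ⟨k.zero_le, by omega⟩, hx⟩)
  · rintro ((hx | ⟨k, ⟨-, hk⟩, hx⟩) | hx)
    · exact ⟨0, by omega, by rwa [hmod 0 m.succ_pos]⟩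
    · exact ⟨k + 1, by omega, by rwa [hmod (k + 1) (by omega)]⟩
    · exact ⟨m + 1, by omega, by rwa [Nat.mod_self, segment_symm]⟩

end Polygon

section FanProfileOfPolygon

/-- The chart image of the part of the polygon `w 0, …, w (m + 1)` away from its vertex `w 0`. -/
def fanProfile (p : E3) (w : ℕ → E3) (k : ℕ) : ℝ × ℝ :=
  slopeChart p (w (k + 1))

variable {p : E3} {w : ℕ → E3} {m : ℕ} {x : E3}

theorem slopeChart_image_polygonalChain (hw : ∀ k ≤ m, w (k + 1) ∈ (slopeChart p).source) :
    slopeChart p '' polygonalChain (fun k => w (k + 1)) 0 m =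
      polygonalChain (fanProfile p w) 0 m :=
  image_polygonalChain fun k hk => image_slopeChart_segment (hw k hk.2.le) (hw (k + 1) hk.2)

theorem polygonalChain_fanProfile_subset_target (hw : ∀ k ≤ m, w (k + 1) ∈ (slopeChart p).source) :
    polygonalChain (fanProfile p w) 0 m ⊆ (slopeChart p).target :=
  polygonalChain_subset_of_convex convex_slopeChart_target
    fun k hk => (slopeChart p).map_source (hw k hk.2)

theorem slopeChart_mem_of_mem_polyBoundary (hw0 : w 0 = ![0, p 1, p 2])
    (hw : ∀ k ≤ m, w (k + 1) ∈ (slopeChart p).source) (hx : x ∈ (slopeChart p).source)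
    (hxB : x ∈ polyBoundary w (m + 2)) :
    slopeChart p x ∈ polygonalChain (fanProfile p w) 0 m ∨
      ∃ k, (k = 0 ∨ k = m) ∧ slopeChart p x ∈ upwardHull {fanProfile p w k} := by
  rw [polyBoundary_add_two, hw0] at hxB
  rcases hxB with (hfirst | hchain) | hlast
  · exact Or.inr ⟨0, Or.inl rfl,
      (slopeChart_mem_upwardHull_singleton_iff hx (hw 0 m.zero_le)).2 hfirst⟩
  · rw [← slopeChart_image_polygonalChain hw]
    exact Or.inl ⟨x, hchain, rfl⟩
  · exact Or.inr ⟨m, Or.inr rfl, (slopeChart_mem_upwardHull_singleton_iff hx (hw m le_rfl)).2 hlast⟩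

theorem slopeChart_mem_upwardHull_of_mem_polyBoundary (hm : 0 < m) (hw0 : w 0 = ![0, p 1, p 2])
    (hw : ∀ k ≤ m, w (k + 1) ∈ (slopeChart p).source) (hx : x ∈ (slopeChart p).source)
    (hxB : x ∈ polyBoundary w (m + 2)) :
    slopeChart p x ∈ upwardHull (polygonalChain (fanProfile p w) 0 m) := by
  rcases slopeChart_mem_of_mem_polyBoundary hw0 hw hx hxB with hchain | ⟨k, hk, hray⟩
  · exact subset_upwardHull _ hchain
  · exact upwardHull_singleton_subset
      (vertex_mem_polygonalChain hm ⟨k.zero_le, by omega⟩) hray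

theorem slopeChart_mem_upwardHull_of_mem_polyRegion (hm : 0 < m) (hw0 : w 0 = ![0, p 1, p 2])
    (hw : ∀ k ≤ m, w (k + 1) ∈ (slopeChart p).source) (hx : x ∈ (slopeChart p).source)
    (hxR : x ∈ polyRegion {v : E3 | v 0 = 0} w (m + 2)) :
    slopeChart p x ∈ upwardHull (polygonalChain (fanProfile p w) 0 m) := by
  have hne : w 0 ≠ x := fun h => hx.2.ne (by rw [← h, hw0]; rfl)
  have hplane (t : ℝ) : AffineMap.lineMap (w 0) x t ∈ {v : E3 | v 0 = 0} := by
    simp [AffineMap.pi_lineMap_apply, hw0, hx.1]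
  obtain ⟨t, ht, hyB⟩ := exists_lineMap_mem_polyBoundary hne hplane hxR
  rw [hw0] at hyB
  have hy := lineMap_vanishingPoint_mem_slopeChart_source hx (one_pos.trans_le ht)
  refine upwardHull_subset_upwardHull (singleton_subset_iff.2
    (slopeChart_mem_upwardHull_of_mem_polyBoundary hm hw0 hw hy hyB)) ?_
  rw [slopeChart_mem_upwardHull_singleton_iff hx hy, mem_segment_iff_wbtw]
  exact wbtw_iff_left_eq_or_right_mem_image_Ici.2 (Or.inr ⟨t, ht, rfl⟩)

theorem isImage_polyRegion_upwardHull (hm : 0 < m) (hw0 : w 0 = ![0, p 1, p 2])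
    (hw : ∀ k ≤ m, w (k + 1) ∈ (slopeChart p).source)
    (hkernel : IsKernelVertexAt {v : E3 | v 0 = 0} w (m + 2) 0) :
    (slopeChart p).IsImage (polyRegion {v : E3 | v 0 = 0} w (m + 2))
      (upwardHull (polygonalChain (fanProfile p w) 0 m)) := by
  refine fun x hx => ⟨?_, slopeChart_mem_upwardHull_of_mem_polyRegion hm hw0 hw hx⟩
  rintro ⟨d, hd, hdx⟩
  rw [← slopeChart_image_polygonalChain hw] at hd
  obtain ⟨y, hy, rfl⟩ := hd
  have hyB : y ∈ polyBoundary w (m + 2) := by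
    rw [polyBoundary_add_two]
    exact Or.inl (Or.inr hy)
  have hyS : y ∈ (slopeChart p).source :=
    polygonalChain_subset_of_convex convex_slopeChart_source (fun k hk => hw k hk.2) hy
  apply hkernel y (Or.inl hyB)
  rw [hw0, ← slopeChart_mem_upwardHull_singleton_iff hx hyS]
  exact ⟨_, rfl, hdx⟩

theorem hullOpenOver_fanProfile (hm : 0 < m) (hw0 : w 0 = ![0, p 1, p 2])
    (hw : ∀ k ≤ m, w (k + 1) ∈ (slopeChart p).source)
    (hkernel : IsKernelVertexAt {v : E3 | v 0 = 0} w (m + 2) 0) {s : ℝ}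
    (hs0 : s ≠ (fanProfile p w 0).1) (hsm : s ≠ (fanProfile p w m).1) :
    HullOpenOver (polygonalChain (fanProfile p w) 0 m) s := by
  intro g hg hgC
  set d : ℝ × ℝ := (s, g)
  have himage := isImage_polyRegion_upwardHull hm hw0 hw hkernel
  have hd : d ∈ (slopeChart p).target := by
    obtain ⟨c, hc, -, hcd⟩ := hg
    have hc0 : 0 < c.2 := polygonalChain_fanProfile_subset_target hw hc
    exact hc0.trans_le hcd
  have hR : (slopeChart p).symm d ∈ polyRegion {v : E3 | v 0 = 0} w (m + 2) :=
    (himage.symm hd).2 hg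
  have hB : (slopeChart p).symm d ∉ polyBoundary w (m + 2) := by
    intro hB
    have hcases := slopeChart_mem_of_mem_polyBoundary hw0 hw ((slopeChart p).map_target hd) hB
    rw [(slopeChart p).right_inv hd] at hcases
    rcases hcases with hchain | ⟨k, rfl | rfl, e, rfl, he, -⟩
    exacts [hgC hchain, hs0 he.symm, hsm he.symm]
  have htarget : (slopeChart p).target ∈ 𝓝 d := isOpen_slopeChart_target.mem_nhds hd
  have htendsto : Filter.Tendsto (slopeChart p).symm (𝓝 d)
      (𝓝[{v : E3 | v 0 = 0}] (slopeChart p).symm d) :=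
    tendsto_nhdsWithin_iff.2 ⟨continuousOn_slopeChart_symm.continuousAt htarget,
      Filter.Eventually.of_forall fun _ => (rfl : _ = (0 : ℝ))⟩
  filter_upwards [htarget,
    htendsto (polyRegion_mem_nhdsWithin convex_setOf_apply_zero_eq_zero hR hB)] with e he heR
  exact (himage.symm he).1 heR

theorem injOn_fst_fanProfile (hw0 : w 0 = ![0, p 1, p 2])
    (hw : ∀ k ≤ m, w (k + 1) ∈ (slopeChart p).source) (hgp : GeneralPosition w (m + 2)) :
    InjOn (fun k => (fanProfile p w k).1) (Iic m) := by
  intro i hi j hj hij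
  by_contra hne
  wlog hle : (fanProfile p w j).2 ≤ (fanProfile p w i).2 generalizing i j
  · exact this hj hi hij.symm (Ne.symm hne) (not_le.1 hle).le
  have hseg := (slopeChart_mem_upwardHull_singleton_iff (hw i hi) (hw j hj)).1
    ⟨_, rfl, hij.symm, hle⟩
  rw [mem_Iic] at hi hj
  rw [← hw0, mem_segment_iff_wbtw] at hseg
  exact hgp 0 (by omega) (i + 1) (by omega) (j + 1) (by omega) (by omega) (by omega) (by omega)
    hseg.collinear

theorem polygonalChain_inter_subset_fanProfile (hw : ∀ k ≤ m, w (k + 1) ∈ (slopeChart p).source)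
    (hsimple : IsSimplePolygon w (m + 2)) (k : ℕ) :
    polygonalChain (fanProfile p w) 0 k ∩ polygonalChain (fanProfile p w) k m ⊆
      {fanProfile p w k} := by
  intro d hd
  obtain ⟨⟨i, hi, hdi⟩, j, hj, hdj⟩ := hd.imp mem_polygonalChain.1 mem_polygonalChain.1
  obtain ⟨hik, hkj, hjm⟩ : i < k ∧ k ≤ j ∧ j < m := ⟨hi.2, hj⟩
  obtain ⟨-, hinj, hedges⟩ := hsimple
  have htarget : d ∈ (slopeChart p).target :=
    polygonalChain_fanProfile_subset_target hw (segment_subset_polygonalChain ⟨j.zero_le, hjm⟩ hdj)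
  have hsource := (slopeChart p).map_target htarget
  have hmem : ∀ l < m, d ∈ segment ℝ (fanProfile p w l) (fanProfile p w (l + 1)) →
      (slopeChart p).symm d ∈ segment ℝ (w (l + 1)) (w ((l + 1 + 1) % (m + 2))) := by
    intro l hl hdl
    rw [Nat.mod_eq_of_lt (by omega), ← slopeChart_mem_segment_iff (hw l hl.le) (hw (l + 1) hl)
      hsource, (slopeChart p).right_inv htarget]
    exact hdl
  have hvertex := (hedges (i + 1) (by omega) (j + 1) (by omega) (by omega)).subset
    ⟨hmem i (by omega) hdi, hmem j hjm hdj⟩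
  rw [Nat.mod_eq_of_lt (by omega), Nat.mod_eq_of_lt (by omega)] at hvertex
  have hindex : ∀ a < m + 2, ∀ b < m + 2, (slopeChart p).symm d = w a →
      (slopeChart p).symm d = w b → a = b :=
    fun a ha b hb hda hdb => hinj a ha b hb (hda.symm.trans hdb)
  have hjk : j = k ∧ (slopeChart p).symm d = w (j + 1) := by
    obtain ⟨hda | hda, hdb | hdb⟩ := hvertex <;>
      have := hindex _ (by omega) _ (by omega) hda hdb
    all_goals first | omega | exact ⟨by omega, hdb⟩
  rw [mem_singleton_iff, fanProfile, ← hjk.1, ← hjk.2, (slopeChart p).right_inv htarget]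

theorem isFanProfile_fanProfile (hm : 0 < m) (hw0 : w 0 = ![0, p 1, p 2])
    (hw : ∀ k ≤ m, w (k + 1) ∈ (slopeChart p).source)
    (hsimple : IsSimplePolygon w (m + 2))
    (hkernel : IsKernelVertexAt {v : E3 | v 0 = 0} w (m + 2) 0)
    (hgp : GeneralPosition w (m + 2)) : IsFanProfile (fanProfile p w) m where
  pos := hm
  injOn_fst := injOn_fst_fanProfile hw0 hw hgp
  inter_subset := polygonalChain_inter_subset_fanProfile hw hsimple
  hullOpenOver _ := hullOpenOver_fanProfile hm hw0 hw hkernel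

theorem seesInPoly_iff (hm : 0 < m) (hw0 : w 0 = ![0, p 1, p 2])
    (hw : ∀ k ≤ m, w (k + 1) ∈ (slopeChart p).source)
    (hkernel : IsKernelVertexAt {v : E3 | v 0 = 0} w (m + 2) 0) {a b : E3}
    (ha : a ∈ (slopeChart p).source) (hb : b ∈ (slopeChart p).source) :
    SeesInPoly {v : E3 | v 0 = 0} w (m + 2) a b ↔
      segment ℝ (slopeChart p a) (slopeChart p b) ⊆
        upwardHull (polygonalChain (fanProfile p w) 0 m) := by
  rw [← image_slopeChart_segment ha hb, image_subset_iff]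
  have himage := isImage_polyRegion_upwardHull hm hw0 hw hkernel
  exact forall₂_congr fun x hx =>
    (himage (convex_slopeChart_source.segment_subset ha hb hx)).symm

theorem fanProfile_notMem_segment (hw : ∀ k ≤ m, w (k + 1) ∈ (slopeChart p).source)
    (hgp : GeneralPosition w (m + 2)) {i j k : ℕ} (hi : i ≤ m) (hj : j ≤ m) (hk : k ≤ m)
    (hij : i ≠ j) (hki : k ≠ i) (hkj : k ≠ j) :
    fanProfile p w k ∉ segment ℝ (fanProfile p w i) (fanProfile p w j) := by
  intro hmem
  have hseg := (slopeChart_mem_segment_iff (hw i hi) (hw j hj) (hw k hk)).1 hmem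
  rw [mem_segment_iff_wbtw] at hseg
  exact hgp (i + 1) (by omega) (k + 1) (by omega) (j + 1) (by omega) (by omega) (by omega)
    (by omega) hseg.collinear

end FanProfileOfPolygon

section Projection

variable {p : E3} {f : E3 → E3} {a b q : E3}

namespace IsCentralProjC

theorem apply_eq (hf : IsCentralProjC p f) (ha : a ∈ (slopeChart p).source) :
    f a 0 = p 0 * (1 - p 2 * (slopeChart p a).2) ∧ f a 1 = p 1 + p 2 * (slopeChart p a).1 := by
  obtain ⟨ha0, ha2⟩ := ha
  obtain ⟨hz, t, ht⟩ := hf a ha0 ha2.ne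
  have hdepth : p 2 - a 2 ≠ 0 := (sub_pos.2 ha2).ne'
  have ht' : t = p 2 / (p 2 - a 2) := by
    have hfa : p 2 + t * (a 2 - p 2) = 0 := by rw [← hz, ht]; rfl
    rw [eq_div_iff hdepth]
    linear_combination -hfa
  subst ht'
  rw [ht]
  constructor
  · change p 0 + p 2 / (p 2 - a 2) * (a 0 - p 0) = p 0 * (1 - p 2 * (p 2 - a 2)⁻¹)
    rw [ha0]
    ring
  · change p 1 + p 2 / (p 2 - a 2) * (a 1 - p 1) = p 1 + p 2 * ((a 1 - p 1) / (p 2 - a 2))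
    ring

theorem onOrAbove_iff (hf : IsCentralProjC p f) (hp0 : 0 < p 0) (hp2 : 0 < p 2)
    (ha : a ∈ (slopeChart p).source) (hb : b ∈ (slopeChart p).source)
    (hq : q ∈ (slopeChart p).source) : OnOrAbove (f a) (f b) (f q) ↔
      slopeChart p q ∈ upwardHull (segment ℝ (slopeChart p a) (slopeChart p b)) := by
  obtain ⟨ha0, ha1⟩ := hf.apply_eq ha
  obtain ⟨hb0, hb1⟩ := hf.apply_eq hb
  obtain ⟨hq0, hq1⟩ := hf.apply_eq hq
  rw [OnOrAbove, mem_upwardHull_segment_iff, ha0, ha1, hb0, hb1, hq0, hq1]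
  refine exists_congr fun t => and_congr_right fun _ => and_congr ?_ ?_
  · rw [← mul_right_inj' hp2.ne' (b := (slopeChart p q).1), smul_eq_mul, smul_eq_mul]
    constructor <;> intro h <;> linear_combination h
  · rw [← mul_le_mul_iff_right₀ (mul_pos hp0 hp2) (c := (slopeChart p q).2)]
    constructor <;> intro h <;> linear_combination h

theorem seesInTerrain_iff (hf : IsCentralProjC p f) (hp0 : 0 < p 0) (hp2 : 0 < p 2) {w : ℕ → E3}
    {m i j : ℕ} (hw : ∀ k ≤ m, w (k + 1) ∈ (slopeChart p).source) (hi : i ≤ m) (hj : j ≤ m) :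
    SeesInTerrain (fun k => f (w (k + 1))) (m + 1) i j ↔ ∀ k ≤ m, k ≠ i → k ≠ j →
      fanProfile p w k ∉ upwardHull (segment ℝ (fanProfile p w i) (fanProfile p w j)) := by
  simp only [SeesInTerrain, Nat.lt_succ_iff]
  exact forall₂_congr fun k hk => forall₂_congr fun _ _ =>
    not_congr (hf.onOrAbove_iff hp0 hp2 (hw i hi) (hw j hj) (hw k hk))

end IsCentralProjC

end Projection

/-- Let `F = (v₀, v₁, …, v_{n-1})` be a convex fan in general position drawn in the plane
`Γ = {x = 0}` with convex kernel vertex `v₀ = (0, p₂, p₃)`, all other vertices having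
`z`-coordinate less than `p₃`, and let `T = (f v₁, …, f v_{n-1})` be the resulting
terrain in `Ω = {z = 0}`. Then for all `i, j ∈ {1, …, n-1}`, the vertices `v_i` and `v_j`
see each other in `F` if and only if `f v_i` and `f v_j` see each other in `T`. -/
theorem convex_fan_terrain_visibility
    (p : E3) (hp1 : 0 < p 0) (hp3 : 0 < p 2)
    (f : E3 → E3) (hf : IsCentralProjC p f)
    (n : ℕ) (w : ℕ → E3)
    (hw0 : w 0 = ![0, p 1, p 2])
    (hwΓ : ∀ i < n, w i 0 = 0)
    (hbelow : ∀ i, 0 < i → i < n → w i 2 < p 2)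
    (hfan : IsConvexFanAt {v : E3 | v 0 = 0} w n 0)
    (hgp : GeneralPosition w n) :
    ∀ i j, 1 ≤ i → i < n → 1 ≤ j → j < n → i ≠ j →
      (SeesInPoly {v : E3 | v 0 = 0} w n (w i) (w j) ↔
        SeesInTerrain (fun k => f (w (k + 1))) (n - 1) (i - 1) (j - 1)) := by
  obtain ⟨hsimple, -, hkernel⟩ := hfan
  obtain ⟨m, rfl⟩ : ∃ m, n = m + 2 := Nat.exists_eq_add_of_le' ((Nat.le_succ 2).trans hsimple.1)
  have hm : 0 < m := by have := hsimple.1; omega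
  have hw : ∀ k ≤ m, w (k + 1) ∈ (slopeChart p).source := fun k hk =>
    ⟨hwΓ (k + 1) (by omega), hbelow (k + 1) k.succ_pos (by omega)⟩
  have hprofile := isFanProfile_fanProfile hm hw0 hw hsimple hkernel hgp
  intro i j hi1 hi hj1 hj hij
  obtain ⟨i, rfl⟩ := Nat.exists_eq_add_of_le' hi1
  obtain ⟨j, rfl⟩ := Nat.exists_eq_add_of_le' hj1
  replace hi : i ≤ m := by omega
  replace hj : j ≤ m := by omega
  replace hij : i ≠ j := by omega
  exact (seesInPoly_iff hm hw0 hw hkernel (hw i hi) (hw j hj)).trans <|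
    (hprofile.segment_subset_upwardHull_iff hi hj hij fun k hk =>
      fanProfile_notMem_segment hw hgp hi hj hk hij).trans
    (hf.seesInTerrain_iff hp1 hp3 hw hi hj).symm
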